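/- Fix integers M ≥ 0, N ≥ 1, reals ε > 0 and a < b, and a continuous function g : [−1,1] × [a,b] → ℝ. Let h(x,t) be a real polynomial function of degree at most M in x and at most N in t, and suppose that for every real polynomial function w(x,t) of degree at most M in x and at most N−1 in t (with no boundary conditions imposed) one has ∫_a^b ∫₋₁¹ [∂_t h·w + ε ∂_x h·∂_x w + (g(x,t) − ḡ(t))·w] dx dt = 0, where ḡ(t) := (1/2)∫₋₁¹ g(x,t) dx is the spatial average of g. Then the total mass is conserved: ∫₋₁¹ h(x,b) dx = ∫₋₁¹ h(x,a) dx. -/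

import Mathlib

open MeasureTheory intervalIntegral

/-- `h(x,t)` is a real polynomial function of degree at most `M` in `x` and
at most `N` in `t`. -/
def IsPolyMN (M N : ℕ) (h : ℝ → ℝ → ℝ) : Prop :=
  ∃ c : Fin (M + 1) → Fin (N + 1) → ℝ,
    ∀ x t : ℝ, h x t = ∑ i : Fin (M + 1), ∑ j : Fin (N + 1),
      c i j * x ^ (i : ℕ) * t ^ (j : ℕ)

/-- The trial space `V_{M,N}`: polynomial functions of degree at most `M` in
`x` and at most `N` in `t`, vanishing at `x = ±1`. -/
def MemV (M N : ℕ) (h : ℝ → ℝ → ℝ) : Prop :=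
  IsPolyMN M N h ∧ ∀ t : ℝ, h (-1) t = 0 ∧ h 1 t = 0

/-- The test space `W_{M,N−1}`: polynomial functions of degree at most `M` in
`x` and at most `N−1` in `t`, vanishing at `x = ±1`. -/
def MemW (M N : ℕ) (w : ℝ → ℝ → ℝ) : Prop :=
  IsPolyMN M (N - 1) w ∧ ∀ t : ℝ, w (-1) t = 0 ∧ w 1 t = 0

/-- Partial derivative in time. -/
noncomputable def ptd (h : ℝ → ℝ → ℝ) (x t : ℝ) : ℝ := deriv (fun s => h x s) t

/-- Partial derivative in space. -/
noncomputable def pxd (h : ℝ → ℝ → ℝ) (x t : ℝ) : ℝ := deriv (fun y => h y t) x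

/-- A polynomial function in two variables is continuously differentiable. -/
lemma IsPolyMN.contDiff {M N : ℕ} {h : ℝ → ℝ → ℝ} (hpoly : IsPolyMN M N h) :
    ContDiff ℝ 1 (fun p : ℝ × ℝ => h p.1 p.2) := by
  obtain ⟨c, hc⟩ := hpoly
  simp only [hc]
  fun_prop

/-- The constant function `1` belongs to every polynomial space. -/
lemma isPolyMN_one (M N : ℕ) : IsPolyMN M N (fun _ _ => 1) := by
  refine ⟨fun i j => if i = 0 ∧ j = 0 then 1 else 0, fun x t => ?_⟩
  rw [Finset.sum_eq_single 0, Finset.sum_eq_single 0] <;> simp +contextual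

lemma hasDerivAt_ptd {h : ℝ → ℝ → ℝ} (hh : ContDiff ℝ 1 (fun p : ℝ × ℝ => h p.1 p.2))
    (x t : ℝ) : HasDerivAt (fun s => h x s) (ptd h x t) t := by
  have : ContDiff ℝ 1 (fun s => h x s) :=
    hh.comp (contDiff_const.prodMk contDiff_id : ContDiff ℝ 1 fun s : ℝ => (x, s))
  exact (this.differentiable one_ne_zero t).hasDerivAt

lemma continuous_ptd {h : ℝ → ℝ → ℝ} (hh : ContDiff ℝ 1 (fun p : ℝ × ℝ => h p.1 p.2)) :
    Continuous (fun p : ℝ × ℝ => ptd h p.1 p.2) := by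
  have key : ∀ p : ℝ × ℝ,
      ptd h p.1 p.2 = fderiv ℝ (fun p : ℝ × ℝ => h p.1 p.2) p (0, 1) := by
    intro p
    have hp : HasFDerivAt (fun p : ℝ × ℝ => h p.1 p.2) _ (p.1, p.2) :=
      (hh.differentiable one_ne_zero p).hasFDerivAt
    exact (hp.comp_hasDerivAt p.2 ((hasDerivAt_const p.2 p.1).prodMk (hasDerivAt_id p.2))).deriv
  simp only [key]
  exact (hh.continuous_fderiv one_ne_zero).clm_apply continuous_const

/-- Integrating the time derivative over a space–time rectangle gives the change of mass. -/
lemma integral_integral_ptd {h : ℝ → ℝ → ℝ}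
    (hh : ContDiff ℝ 1 (fun p : ℝ × ℝ => h p.1 p.2)) (a b c d : ℝ) :
    ∫ t in a..b, ∫ x in c..d, ptd h x t = (∫ x in c..d, h x b) - ∫ x in c..d, h x a := by
  have hcont := continuous_ptd hh
  have hslice (t : ℝ) : Continuous (fun x => h x t) :=
    hh.continuous.comp (by fun_prop : Continuous fun x : ℝ => (x, t))
  rw [intervalIntegral_intervalIntegral_swap (F := fun t x => ptd h x t),
    ← integral_sub ((hslice b).intervalIntegrable _ _) ((hslice a).intervalIntegrable _ _)]
  · refine integral_congr fun x _ => ?_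
    exact integral_eq_sub_of_hasDerivAt (fun t _ => hasDerivAt_ptd hh x t)
      ((hcont.comp (by fun_prop : Continuous fun t : ℝ => (x, t))).intervalIntegrable _ _)
  · exact ((hcont.comp continuous_swap).continuousOn.integrableOn_compact
      (isCompact_uIcc.prod isCompact_uIcc)).mono_set
        (Set.prod_mono Set.uIoc_subset_uIcc Set.uIoc_subset_uIcc)

/-- A function on `(-1, 1)` minus its average has integral zero. -/
lemma integral_sub_average {f : ℝ → ℝ} (hf : IntervalIntegrable f volume (-1) 1) :
    ∫ x in (-1 : ℝ)..1, (f x - (1 / 2) * ∫ y in (-1 : ℝ)..1, f y) = 0 := by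
  rw [integral_sub hf intervalIntegrable_const, intervalIntegral.integral_const, smul_eq_mul]
  ring

/-- Discrete mass conservation of the ESET scheme for the conservative
Allen–Cahn equation on `Ω = (−1,1)` (so `|Ω| = 2`): if the space–time Galerkin
relation holds with source `g − ḡ(t)` where `ḡ(t) = (1/2)∫₋₁¹ g(x,t) dx`, for
all polynomial test functions (no boundary conditions imposed), then the total
mass `∫₋₁¹ h(x,t) dx` is the same at `t = b` as at `t = a`. -/
theorem eset_conservative_mass_conservation (M N : ℕ) (hN : 1 ≤ N)
    (ε : ℝ) (hε : 0 < ε) (a b : ℝ) (hab : a < b)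
    (g : ℝ → ℝ → ℝ)
    (hg : ContinuousOn (fun p : ℝ × ℝ => g p.1 p.2)
      (Set.Icc (-1 : ℝ) 1 ×ˢ Set.Icc a b))
    (h : ℝ → ℝ → ℝ) (hpoly : IsPolyMN M N h)
    (hweak : ∀ w : ℝ → ℝ → ℝ, IsPolyMN M (N - 1) w →
      (∫ t in a..b, ∫ x in (-1 : ℝ)..1,
        (ptd h x t * w x t + ε * pxd h x t * pxd w x t +
          (g x t - (1 / 2) * ∫ y in (-1 : ℝ)..1, g y t) * w x t)) = 0) :
    (∫ x in (-1 : ℝ)..1, h x b) = ∫ x in (-1 : ℝ)..1, h x a := by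
  have hh := hpoly.contDiff
  have htest := hweak _ (isPolyMN_one M (N - 1))
  have hinner : ∀ t ∈ Set.uIcc a b, (∫ x in (-1 : ℝ)..1,
      (ptd h x t * 1 + ε * pxd h x t * pxd (fun _ _ => 1) x t +
        (g x t - (1 / 2) * ∫ y in (-1 : ℝ)..1, g y t) * 1)) =
      ∫ x in (-1 : ℝ)..1, ptd h x t := by
    intro t ht
    rw [Set.uIcc_of_le hab.le] at ht
    have hgt : IntervalIntegrable (fun x => g x t) volume (-1) 1 := by
      refine ContinuousOn.intervalIntegrable_of_Icc (by norm_num) ?_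
      exact hg.comp (by fun_prop : ContinuousOn (fun x : ℝ => (x, t)) _) fun x hx => ⟨hx, ht⟩
    have hpt : IntervalIntegrable (fun x => ptd h x t) volume (-1) 1 :=
      ((continuous_ptd hh).comp
        (by fun_prop : Continuous fun x : ℝ => (x, t))).intervalIntegrable _ _
    simp only [pxd, deriv_const, mul_zero, add_zero, mul_one]
    rw [integral_add hpt (hgt.sub intervalIntegrable_const), integral_sub_average hgt, add_zero]
  rw [integral_congr hinner, integral_integral_ptd hh] at htest
  exact sub_eq_zero.mp htest
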